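/- arXiv:2304.02334 — 3 statements merged into one kernel-verified Lean document; each statement's English description precedes it below -/
import Mathlib

section
/- Let c ≥ √2 and let u : ℝ → ℂ be a bounded smooth function with u' ∈ L²(ℝ) and 1 − |u|² ∈ L²(ℝ) satisfying i·c·u'(x) + u''(x) + (1 − |u(x)|²)·u(x) = 0 for all x ∈ ℝ. Then u is a constant function of modulus one. -/
open MeasureTheory

/-- A bounded-above function on the line with nonnegative second derivative has zero derivative. -/
theorem deriv_zero_of_convex_bdd (f f1 f2 : ℝ → ℝ) (h1 : ∀ x, HasDerivAt f (f1 x) x)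
    (h2 : ∀ x, HasDerivAt f1 (f2 x) x) (h3 : ∀ x, 0 ≤ f2 x) (B : ℝ) (hB : ∀ x, f x ≤ B)
    (x : ℝ) : f1 x = 0 := by
  have hmono : Monotone f1 := monotone_of_hasDerivAt_nonneg h2 h3
  have hcont : Continuous f := continuous_iff_continuousAt.2 fun x => (h1 x).continuousAt
  by_contra hne
  have hBx := hB x
  rcases lt_or_gt_of_ne hne with hneg | hpos
  · set t : ℝ := (B - f x + 1) / (-f1 x) with ht
    have htpos : 0 < t := div_pos (by linarith) (by linarith)
    have hmul : t * (-f1 x) = B - f x + 1 := by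
      rw [ht]; exact div_mul_cancel₀ _ (by linarith)
    obtain ⟨z, hz, hz2⟩ := exists_hasDerivAt_eq_slope f f1 (a := x - t) (b := x) (by linarith)
      hcont.continuousOn (fun y _ => h1 y)
    have hle := hmono hz.2.le
    have hB' := hB (x - t)
    rw [eq_div_iff (by linarith)] at hz2
    nlinarith
  · set t : ℝ := (B - f x + 1) / (f1 x) with ht
    have htpos : 0 < t := div_pos (by linarith) (by linarith)
    have hmul : t * (f1 x) = B - f x + 1 := by
      rw [ht]; exact div_mul_cancel₀ _ (by linarith)
    obtain ⟨z, hz, hz2⟩ := exists_hasDerivAt_eq_slope f f1 (a := x) (b := x + t) (by linarith)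
      hcont.continuousOn (fun y _ => h1 y)
    have hle := hmono hz.1.le
    have hB' := hB (x + t)
    rw [eq_div_iff (by linarith)] at hz2
    nlinarith

/-- Nonexistence of supersonic dark solitons for the local Gross--Pitaevskii equation:
if `c ≥ √2` then every bounded smooth finite-energy solution of
`i c u' + u'' + (1 - |u|²) u = 0` is a constant of modulus one. -/
theorem supersonic_solutions_trivial
    (c : ℝ) (hc : Real.sqrt 2 ≤ c)
    (u : ℝ → ℂ) (hu_smooth : ContDiff ℝ (⊤ : ℕ∞) u)
    (hu_bdd : ∃ M : ℝ, ∀ x, ‖u x‖ ≤ M)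
    (hu_deriv : MemLp (deriv u) 2 (volume : Measure ℝ))
    (hu_mod : MemLp (fun x : ℝ => 1 - ‖u x‖ ^ 2) 2 (volume : Measure ℝ))
    (heq : ∀ x : ℝ, Complex.I * (c : ℂ) * deriv u x + deriv (deriv u) x +
        ((1 - ‖u x‖ ^ 2 : ℝ) : ℂ) * u x = 0) :
    ∃ z : ℂ, ‖z‖ = 1 ∧ ∀ x : ℝ, u x = z := by
  obtain ⟨M, hM⟩ := hu_bdd
  have hc2 : 2 ≤ c ^ 2 := by
    have h := Real.sq_sqrt (show (0:ℝ) ≤ 2 by norm_num)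
    have h0 := Real.sqrt_nonneg 2
    nlinarith
  have hd1 : ∀ x, HasDerivAt u (deriv u x) x := fun x =>
    (hu_smooth.differentiable (by simp) x).hasDerivAt
  have hsm : ContDiff ℝ (⊤ : ℕ∞) (deriv u) := (contDiff_infty_iff_deriv.1 hu_smooth).2
  have hd2 : ∀ x, HasDerivAt (deriv u) (deriv (deriv u) x) x := fun x =>
    (hsm.differentiable (by simp) x).hasDerivAt
  have hre : ∀ (f : ℝ → ℂ) (f' : ℂ) (x : ℝ), HasDerivAt f f' x →
      HasDerivAt (fun y => (f y).re) f'.re x := fun f f' x h =>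
    (Complex.reCLM.hasFDerivAt.comp_hasDerivAt x h)
  have him : ∀ (f : ℝ → ℂ) (f' : ℂ) (x : ℝ), HasDerivAt f f' x →
      HasDerivAt (fun y => (f y).im) f'.im x := fun f f' x h =>
    (Complex.imCLM.hasFDerivAt.comp_hasDerivAt x h)
  obtain ⟨a, ha⟩ : ∃ a : ℝ → ℝ, a = fun x => (u x).re := ⟨_, rfl⟩
  obtain ⟨b, hb⟩ : ∃ a : ℝ → ℝ, a = fun x => (u x).im := ⟨_, rfl⟩
  obtain ⟨p, hp⟩ : ∃ a : ℝ → ℝ, a = fun x => (deriv u x).re := ⟨_, rfl⟩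
  obtain ⟨q, hq⟩ : ∃ a : ℝ → ℝ, a = fun x => (deriv u x).im := ⟨_, rfl⟩
  obtain ⟨η, hη⟩ : ∃ η : ℝ → ℝ, η = fun x => 1 - (a x ^ 2 + b x ^ 2) := ⟨_, rfl⟩
  have hηx : ∀ x, η x = 1 - (a x ^ 2 + b x ^ 2) := fun x => by rw [hη]
  have hnorm : ∀ z : ℂ, ‖z‖ ^ 2 = z.re ^ 2 + z.im ^ 2 := fun z => by
    rw [← Complex.normSq_eq_norm_sq, Complex.normSq_apply]; ring
  have hηn : ∀ x, 1 - ‖u x‖ ^ 2 = η x := fun x => by rw [hnorm, hη, ha, hb]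
  have dp : ∀ x, (deriv (deriv u) x).re = c * q x - η x * a x := fun x => by
    have h := congrArg Complex.re (heq x)
    rw [hηn] at h
    simp at h
    simp only [hq, ha]
    linarith
  have dq : ∀ x, (deriv (deriv u) x).im = - c * p x - η x * b x := fun x => by
    have h := congrArg Complex.im (heq x)
    rw [hηn] at h
    simp at h
    simp only [hp, hb]
    linarith
  have da : ∀ x, HasDerivAt a (p x) x := fun x => by
    rw [ha, hp]; exact hre _ _ _ (hd1 x)
  have db : ∀ x, HasDerivAt b (q x) x := fun x => by
    rw [hb, hq]; exact him _ _ _ (hd1 x)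
  have dp' : ∀ x, HasDerivAt p (c * q x - η x * a x) x := fun x => by
    rw [← dp, hp]; exact hre _ _ _ (hd2 x)
  have dq' : ∀ x, HasDerivAt q (- c * p x - η x * b x) x := fun x => by
    rw [← dq, hq]; exact him _ _ _ (hd2 x)
  have dη : ∀ x, HasDerivAt η (-2 * (a x * p x + b x * q x)) x := fun x => by
    have h := (((da x).fun_pow 2).fun_add ((db x).fun_pow 2)).const_sub 1
    rw [hη]
    exact h.congr_deriv (by push_cast; ring)
  have hmodη : MemLp η 2 volume := by
    have : η = fun x : ℝ => 1 - ‖u x‖ ^ 2 := by funext x; rw [hηn]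
    rw [this]; exact hu_mod
  -- a constant in `L^2` is zero
  have hconst2 : ∀ K : ℝ, MemLp (fun _ : ℝ => K) 2 volume → K = 0 := fun K h => by
    rw [memLp_const_iff (by norm_num) (by norm_num)] at h
    simpa using h
  -- energy identity
  have hE : ∀ x, p x ^ 2 + q x ^ 2 = η x ^ 2 / 2 := by
    have dE : ∀ x, HasDerivAt (fun x => p x ^ 2 + q x ^ 2 - η x ^ 2 / 2) 0 x := fun x => by
      have h := (((dp' x).fun_pow 2).fun_add ((dq' x).fun_pow 2)).fun_sub
        (((dη x).fun_pow 2).div_const 2)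
      exact h.congr_deriv (by push_cast; ring)
    have hc0 := is_const_of_deriv_eq_zero (fun x => (dE x).differentiableAt)
      (fun x => (dE x).deriv)
    have hint : Integrable (fun x => p x ^ 2 + q x ^ 2 - η x ^ 2 / 2) volume := by
      have h1 : Integrable (fun x => ‖deriv u x‖ ^ 2) volume := hu_deriv.integrable_norm_pow (by norm_num)
      have h2 : Integrable (fun x => η x ^ 2) volume := hmodη.integrable_sq
      have h3 := h1.sub (h2.div_const 2)
      refine h3.congr (Filter.Eventually.of_forall fun x => ?_)
      simp only [Pi.sub_apply, hnorm, hp, hq]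
    have hfun : (fun x => p x ^ 2 + q x ^ 2 - η x ^ 2 / 2)
        = fun _ => p 0 ^ 2 + q 0 ^ 2 - η 0 ^ 2 / 2 := funext fun x => hc0 x 0
    rw [hfun, integrable_const_iff] at hint
    have hz : p 0 ^ 2 + q 0 ^ 2 - η 0 ^ 2 / 2 = 0 := by
      rcases hint with h | h
      · exact h
      · have := h.measure_univ_lt_top
        simp at this
    intro x
    have := hc0 x 0
    linarith
  -- momentum identity
  have hJ : ∀ x, a x * q x - b x * p x = c / 2 * η x := by
    have dJ : ∀ x, HasDerivAt (fun x => a x * q x - b x * p x - c / 2 * η x) 0 x := fun x => by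
      have h := (((da x).fun_mul (dq' x)).fun_sub ((db x).fun_mul (dp' x))).fun_sub
        ((dη x).const_mul (c / 2))
      exact h.congr_deriv (by ring)
    have hc0 := is_const_of_deriv_eq_zero (fun x => (dJ x).differentiableAt)
      (fun x => (dJ x).deriv)
    have hmem1 : MemLp (fun x => a x * q x - b x * p x) 2 volume := by
      refine MemLp.of_le_mul (c := M) hu_deriv ?_ (Filter.Eventually.of_forall fun x => ?_)
      · have : Continuous (fun x => a x * q x - b x * p x) := by
          refine continuous_iff_continuousAt.2 fun x => ?_
          exact (((da x).fun_mul (dq' x)).fun_sub ((db x).fun_mul (dp' x))).continuousAt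
        exact this.aestronglyMeasurable
      · have h1 : a x * q x - b x * p x = ((starRingEnd ℂ) (u x) * deriv u x).im := by
          simp [ha, hb, hp, hq]; ring
        rw [h1, Real.norm_eq_abs]
        refine (Complex.abs_im_le_norm _).trans ?_
        rw [norm_mul, RCLike.norm_conj]
        exact mul_le_mul_of_nonneg_right (hM x) (norm_nonneg _)
    have hmem : MemLp (fun x => a x * q x - b x * p x - c / 2 * η x) 2 volume :=
      hmem1.sub (hmodη.const_mul (c / 2))
    have hfun : (fun x => a x * q x - b x * p x - c / 2 * η x)
        = fun _ => a 0 * q 0 - b 0 * p 0 - c / 2 * η 0 := funext fun x => hc0 x 0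
    rw [hfun] at hmem
    have hz := hconst2 _ hmem
    intro x
    have := hc0 x 0
    linarith
  -- the first-order ODE for `η`
  have hfirst : ∀ x, (-2 * (a x * p x + b x * q x)) ^ 2 = η x ^ 2 * (2 - c ^ 2 - 2 * η x) := by
    intro x
    have h1 : (a x * p x + b x * q x) ^ 2 + (a x * q x - b x * p x) ^ 2
        = (1 - η x) * (p x ^ 2 + q x ^ 2) := by rw [hηx]; ring
    rw [hE, hJ] at h1
    linear_combination 4 * h1
  have hkey : ∀ x, η x = 0 ∨ 0 ≤ 2 - c ^ 2 - 2 * η x := by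
    intro x
    by_cases h : η x = 0
    · exact Or.inl h
    · right
      have h1 : 0 < η x ^ 2 := by positivity
      have h2 : 0 ≤ η x ^ 2 * (2 - c ^ 2 - 2 * η x) := by rw [← hfirst]; positivity
      exact nonneg_of_mul_nonneg_right h2 h1
  have hsecond : ∀ x, HasDerivAt (fun x => 2 * (a x * p x + b x * q x))
      (3 * η x ^ 2 - (2 - c ^ 2) * η x) x := by
    intro x
    have h := (((da x).fun_mul (dp' x)).fun_add ((db x).fun_mul (dq' x))).const_mul 2
    refine h.congr_deriv ?_
    have h1 := hE x
    have h2 := hJ x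
    have h3 : a x ^ 2 + b x ^ 2 = 1 - η x := by rw [hηx]; ring
    linear_combination 2 * h1 + 2 * c * h2 - 2 * η x * h3
  have hge : ∀ x, η x ^ 2 ≤ 3 * η x ^ 2 - (2 - c ^ 2) * η x := by
    intro x
    rcases hkey x with h | h
    · rw [h]; norm_num
    · have : η x ≤ 0 := by linarith
      nlinarith
  have hzero : ∀ x, 2 * (a x * p x + b x * q x) = 0 := by
    refine deriv_zero_of_convex_bdd (fun x => - η x) _ _ (fun x => ?_) hsecond
      (fun x => (sq_nonneg _).trans (hge x)) (M ^ 2) (fun x => ?_)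
    · exact (dη x).fun_neg.congr_deriv (by ring)
    · have h1 := hηn x
      have h2 := pow_le_pow_left₀ (norm_nonneg _) (hM x) 2
      linarith
  have hη0 : ∀ x, η x = 0 := by
    intro x
    have h0 := hsecond x
    rw [show (fun x => 2 * (a x * p x + b x * q x)) = fun _ => (0:ℝ) from funext hzero] at h0
    have h1 := h0.unique (hasDerivAt_const x (0:ℝ))
    have h2 := hge x
    rw [h1] at h2
    exact pow_eq_zero_iff (two_ne_zero) |>.1 (le_antisymm h2 (sq_nonneg _))
  have hder : ∀ x, deriv u x = 0 := by
    intro x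
    have h1 := hE x
    rw [hη0 x] at h1
    have h2 : ‖deriv u x‖ ^ 2 = 0 := by
      rw [hnorm]; simp only [hp, hq] at h1; linarith
    exact norm_eq_zero.1 (pow_eq_zero_iff (two_ne_zero) |>.1 h2)
  refine ⟨u 0, ?_, fun x => is_const_of_deriv_eq_zero (fun x => (hd1 x).differentiableAt) hder x 0⟩
  have h1 := hηn 0
  rw [hη0] at h1
  have h2 := norm_nonneg (u 0)
  nlinarith
end

section
/- Let c ∈ [0, √2) and let u : ℝ → ℂ be a nonconstant bounded smooth function with u' ∈ L²(ℝ) and 1 − |u|² ∈ L²(ℝ) satisfying i·c·u'(x) + u''(x) + (1 − |u(x)|²)·u(x) = 0 for all x ∈ ℝ. Then there exist α ∈ ℝ and a ∈ ℝ such that u(x) = e^{iα}·u_c(x − a) for all x ∈ ℝ, where u_c(x) = √((2 − c²)/2)·tanh(√(2 − c²)·x/2) − i·c/√2. -/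
open MeasureTheory

lemma aux_const {f : ℝ → ℝ} (h : ∀ x, HasDerivAt f 0 x) (x y : ℝ) : f x = f y :=
  is_const_of_deriv_eq_zero (fun z => (h z).differentiableAt) (fun z => (h z).deriv) x y

/-- A function whose derivative is dominated by it vanishes everywhere if it vanishes once. -/
lemma aux_gron {e e1 : ℝ → ℝ} {K : ℝ} (h : ∀ x, HasDerivAt e (e1 x) x)
    (hb : ∀ x, |e1 x| ≤ K * |e x|) (x0 : ℝ) (h0 : e x0 = 0) (x : ℝ) : e x = 0 := by
  have key : ∀ x, |e x * e1 x| ≤ K * (e x) ^ 2 := by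
    intro x
    rw [abs_mul]
    have := mul_le_mul_of_nonneg_left (hb x) (abs_nonneg (e x))
    rw [← sq_abs (e x)]
    linarith
  have hd : ∀ s x, HasDerivAt (fun x => (e x) ^ 2 * Real.exp (s * x))
      ((2 * (e x * e1 x) + s * (e x) ^ 2) * Real.exp (s * x)) x := by
    intro s x
    have h1 : HasDerivAt (fun x => Real.exp (s * x)) (Real.exp (s * x) * (s * 1)) x :=
      ((hasDerivAt_id x).const_mul s).exp
    have h2 := ((h x).fun_pow 2).fun_mul h1
    refine HasDerivAt.congr_deriv (h2) (Eq.symm ?_)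
    simp
    ring
  have hm : Monotone (fun x => (e x) ^ 2 * Real.exp ((2 * K) * x)) := by
    apply monotone_of_deriv_nonneg (fun z => (hd _ z).differentiableAt)
    intro z
    rw [(hd _ z).deriv]
    apply mul_nonneg _ (Real.exp_pos _).le
    nlinarith [neg_abs_le (e z * e1 z), key z]
  have ha : Antitone (fun x => (e x) ^ 2 * Real.exp ((-(2 * K)) * x)) := by
    apply antitone_of_deriv_nonpos (fun z => (hd _ z).differentiableAt)
    intro z
    rw [(hd _ z).deriv]
    apply mul_nonpos_of_nonpos_of_nonneg _ (Real.exp_pos _).le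
    nlinarith [le_abs_self (e z * e1 z), key z]
  have fin : ∀ s, (e x) ^ 2 * Real.exp (s * x) ≤ (e x0) ^ 2 * Real.exp (s * x0) → e x = 0 := by
    intro s hs
    rw [h0] at hs
    have hp := Real.exp_pos (s * x)
    have : (e x) ^ 2 ≤ 0 := by
      by_contra hcon
      push Not at hcon
      have := mul_pos hcon hp
      simp at hs
      linarith
    exact pow_eq_zero_iff (two_ne_zero) |>.1 (le_antisymm this (sq_nonneg _))
  rcases le_total x x0 with hx | hx
  · exact fin _ (hm hx)
  · exact fin _ (ha hx)

/-- Global solutions of the Riccati equation. -/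
lemma aux_ric {f : ℝ → ℝ} {A k : ℝ} (hA : 0 < A) (hk : Real.sqrt 2 * A = k)
    (h : ∀ x, HasDerivAt f ((A ^ 2 - f x ^ 2) / Real.sqrt 2) x) (hne : ∀ x, A ^ 2 - f x ^ 2 ≠ 0) :
    ∃ a, ∀ x, f x = A * Real.tanh (k * (x - a) / 2) := by
  have h2 : (0:ℝ) < Real.sqrt 2 := by positivity
  have h22 : Real.sqrt 2 ^ 2 = 2 := Real.sq_sqrt (by norm_num)
  have hkpos : 0 < k := by rw [← hk]; positivity
  have hp : ∀ x, f x + A ≠ 0 := by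
    intro x hx
    apply hne x
    have : f x = -A := by linarith
    rw [this]; ring
  have hm : ∀ x, f x - A ≠ 0 := by
    intro x hx
    apply hne x
    have : f x = A := by linarith
    rw [this]; ring
  have hy : ∀ x, HasDerivAt (fun x => (f x - A) / (f x + A) * Real.exp (k * x)) 0 x := by
    intro x
    have h1 : HasDerivAt (fun x => Real.exp (k * x)) (Real.exp (k * x) * (k * 1)) x :=
      ((hasDerivAt_id x).const_mul k).exp
    have h3 := (((h x).sub_const A).fun_div ((h x).add_const A) (hp x)).fun_mul h1
    refine HasDerivAt.congr_deriv (h3) (Eq.symm ?_)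
    have := hp x
    rw [← hk]
    field_simp
    rw [h22]
    ring
  obtain ⟨C, hC⟩ : ∃ C, ∀ x, (f x - A) / (f x + A) * Real.exp (k * x) = C :=
    ⟨_, fun x => aux_const hy x 0⟩
  have hC0 : C ≠ 0 := by
    rw [← hC 0]
    exact mul_ne_zero (div_ne_zero (hm 0) (hp 0)) (Real.exp_pos _).ne'
  have hCneg : C < 0 := by
    by_contra hcon
    have hCpos : 0 < C := lt_of_le_of_ne (not_lt.1 hcon) hC0.symm
    have h3 := hC (Real.log C / k)
    rw [mul_div_cancel₀ _ hkpos.ne', Real.exp_log hCpos] at h3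
    have h4 : (f (Real.log C / k) - A) / (f (Real.log C / k) + A) = 1 := by
      exact mul_right_cancel₀ hCpos.ne' (by rw [h3, one_mul])
    rw [div_eq_one_iff_eq (hp _)] at h4
    linarith
  refine ⟨Real.log (-C) / k, fun x => ?_⟩
  have h3 := hC x
  set z := k * (x - Real.log (-C) / k) / 2 with hz
  have h5 : Real.exp (k * x) = Real.exp z * Real.exp z * (-C) := by
    rw [← Real.exp_add]
    have h8 : Real.exp (z + z) * -C = Real.exp (z + z) * Real.exp (Real.log (-C)) := by
      rw [Real.exp_log (neg_pos.2 hCneg)]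
    rw [h8, ← Real.exp_add]
    congr 1
    rw [hz]
    field_simp
    ring
  rw [h5] at h3
  have h6 : (f x - A) * (Real.exp z * Real.exp z) = - (f x + A) := by
    have := hp x
    field_simp at h3
    linarith
  have h7 : Real.exp z * Real.exp (-z) = 1 := by rw [← Real.exp_add]; simp
  rw [Real.tanh_eq_sinh_div_cosh, Real.sinh_eq, Real.cosh_eq]
  have e1 := Real.exp_pos z
  have e2 := Real.exp_pos (-z)
  have : Real.exp z + Real.exp (-z) ≠ 0 := by positivity
  field_simp
  apply mul_left_cancel₀ e1.ne'
  linear_combination h6 + (f x + A) * h7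

/-- Uniqueness of subsonic dark solitons for the local Gross--Pitaevskii equation:
every nonconstant bounded smooth finite-energy solution with speed `c ∈ [0, √2)` equals
`e^{iα} u_c(· - a)` for some `α, a ∈ ℝ`, where
`u_c(x) = √((2-c²)/2) tanh(√(2-c²) x/2) - i c/√2`. -/
theorem subsonic_solutions_unique
    (c : ℝ) (hc : c ∈ Set.Ico 0 (Real.sqrt 2))
    (u : ℝ → ℂ) (hu_smooth : ContDiff ℝ (⊤ : ℕ∞) u)
    (hu_bdd : ∃ M : ℝ, ∀ x, ‖u x‖ ≤ M)
    (hu_nonconst : ∃ x y, u x ≠ u y)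
    (hu_deriv : MemLp (deriv u) 2 (volume : Measure ℝ))
    (hu_mod : MemLp (fun x : ℝ => 1 - ‖u x‖ ^ 2) 2 (volume : Measure ℝ))
    (heq : ∀ x : ℝ, Complex.I * (c : ℂ) * deriv u x + deriv (deriv u) x +
        ((1 - ‖u x‖ ^ 2 : ℝ) : ℂ) * u x = 0) :
    ∃ α a : ℝ, ∀ x : ℝ,
      u x = Complex.exp (Complex.I * (α : ℂ)) *
        (((Real.sqrt ((2 - c ^ 2) / 2) * Real.tanh (Real.sqrt (2 - c ^ 2) * (x - a) / 2) : ℝ) : ℂ)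
          - Complex.I * ((c / Real.sqrt 2 : ℝ) : ℂ)) := by
  obtain ⟨hc0, hc1⟩ := hc
  obtain ⟨M, hM⟩ := hu_bdd
  have h2 : (0:ℝ) < Real.sqrt 2 := by positivity
  have h22 : Real.sqrt 2 ^ 2 = 2 := Real.sq_sqrt (by norm_num)
  have hc2 : 0 < 2 - c ^ 2 := by nlinarith
  have hMnn : 0 ≤ M := (norm_nonneg _).trans (hM 0)
  -- derivatives
  have hu1 : ∀ x, HasDerivAt u (deriv u x) x := fun x =>
    ((hu_smooth.differentiable (by simp)) x).hasDerivAt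
  have hsm1 : ContDiff ℝ (⊤ : ℕ∞) (deriv u) :=
    (contDiff_infty_iff_deriv.1 hu_smooth).2
  have hu2 : ∀ x, HasDerivAt (deriv u) (deriv (deriv u) x) x := fun x =>
    ((hsm1.differentiable (by simp)) x).hasDerivAt
  have re_d : ∀ {v : ℝ → ℂ} {v1 : ℂ} {x : ℝ}, HasDerivAt v v1 x →
      HasDerivAt (fun x => (v x).re) v1.re x := fun h =>
    (Complex.reCLM.hasFDerivAt.comp_hasDerivAt _ h)
  have im_d : ∀ {v : ℝ → ℂ} {v1 : ℂ} {x : ℝ}, HasDerivAt v v1 x →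
      HasDerivAt (fun x => (v x).im) v1.im x := fun h =>
    (Complex.imCLM.hasFDerivAt.comp_hasDerivAt _ h)
  have hnorm : ∀ x, ‖u x‖ ^ 2 = (u x).re ^ 2 + (u x).im ^ 2 := by
    intro x
    rw [Complex.sq_norm, Complex.normSq_apply]; ring
  obtain ⟨p, hp⟩ : ∃ p : ℝ → ℝ, ∀ x, p x = (u x).re := ⟨_, fun _ => rfl⟩
  obtain ⟨q, hq⟩ : ∃ q : ℝ → ℝ, ∀ x, q x = (u x).im := ⟨_, fun _ => rfl⟩
  obtain ⟨p1, hp1⟩ : ∃ p : ℝ → ℝ, ∀ x, p x = (deriv u x).re := ⟨_, fun _ => rfl⟩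
  obtain ⟨q1, hq1⟩ : ∃ q : ℝ → ℝ, ∀ x, q x = (deriv u x).im := ⟨_, fun _ => rfl⟩
  obtain ⟨e, he⟩ : ∃ e : ℝ → ℝ, ∀ x, e x = 1 - p x ^ 2 - q x ^ 2 := ⟨_, fun _ => rfl⟩
  have hee : ∀ x, 1 - ‖u x‖ ^ 2 = e x := by
    intro x; rw [hnorm, he, hp, hq]; ring
  have dp : ∀ x, HasDerivAt p (p1 x) x := by
    intro x; rw [funext hp, hp1]; exact re_d (hu1 x)
  have dq : ∀ x, HasDerivAt q (q1 x) x := by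
    intro x; rw [funext hq, hq1]; exact im_d (hu1 x)
  have dp1 : ∀ x, HasDerivAt p1 (c * q1 x - e x * p x) x := by
    intro x
    have h := re_d (hu2 x)
    rw [← funext hp1] at h
    convert h using 1
    have h3 := congrArg Complex.re (heq x)
    rw [hee] at h3
    simp [-Complex.ofReal_sub, -Complex.ofReal_pow] at h3
    rw [hq1, hp]
    linarith
  have dq1 : ∀ x, HasDerivAt q1 (-c * p1 x - e x * q x) x := by
    intro x
    have h := im_d (hu2 x)
    rw [← funext hq1] at h
    convert h using 1
    have h3 := congrArg Complex.im (heq x)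
    rw [hee] at h3
    simp [-Complex.ofReal_sub, -Complex.ofReal_pow] at h3
    rw [hp1, hq]
    linarith
  have de : ∀ x, HasDerivAt e (-2 * (p x * p1 x + q x * q1 x)) x := by
    intro x
    rw [funext he]
    refine HasDerivAt.congr_deriv (((((dp x).fun_pow 2).const_sub 1).fun_sub ((dq x).fun_pow 2))) (Eq.symm ?_)
    simp
    ring
  -- integrability
  have Le : MemLp e 2 (volume : Measure ℝ) := by
    rw [← funext hee]; exact hu_mod
  have Lp1 : MemLp p1 2 (volume : Measure ℝ) := by
    rw [funext hp1]; exact hu_deriv.re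
  have Lq1 : MemLp q1 2 (volume : Measure ℝ) := by
    rw [funext hq1]; exact hu_deriv.im
  have cp : Continuous p := continuous_iff_continuousAt.2 fun x => (dp x).continuousAt
  have cq : Continuous q := continuous_iff_continuousAt.2 fun x => (dq x).continuousAt
  have bp : ∀ x, |p x| ≤ M := fun x => by
    rw [hp]; exact (Complex.abs_re_le_norm _).trans (hM x)
  have bq : ∀ x, |q x| ≤ M := fun x => by
    rw [hq]; exact (Complex.abs_im_le_norm _).trans (hM x)
  have bpq : ∀ x, p x ^ 2 + q x ^ 2 ≤ M ^ 2 := fun x => by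
    rw [hp, hq, ← hnorm]; exact pow_le_pow_left₀ (norm_nonneg _) (hM x) 2
  -- first conservation law
  have hE : ∀ x, p1 x ^ 2 + q1 x ^ 2 = e x ^ 2 / 2 := by
    have hd : ∀ x, HasDerivAt (fun x => p1 x ^ 2 + q1 x ^ 2 - e x ^ 2 / 2) 0 x := by
      intro x
      refine HasDerivAt.congr_deriv ((((dp1 x).fun_pow 2).fun_add ((dq1 x).fun_pow 2)).fun_sub
        (((de x).fun_pow 2).div_const 2)) (Eq.symm ?_)
      simp
      ring
    have hi : Integrable (fun x => p1 x ^ 2 + q1 x ^ 2 - e x ^ 2 / 2) (volume : Measure ℝ) :=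
      (Lp1.integrable_sq.add Lq1.integrable_sq).sub (Le.integrable_sq.div_const 2)
    intro x
    have hcst : (fun x => p1 x ^ 2 + q1 x ^ 2 - e x ^ 2 / 2) =
        fun _ => p1 x ^ 2 + q1 x ^ 2 - e x ^ 2 / 2 := funext fun y => aux_const hd y x
    rw [hcst, integrable_const_iff] at hi
    rcases hi with hi | hi
    · linarith
    · exact absurd hi.measure_univ_lt_top (by simp)
  -- second conservation law
  have hP : ∀ x, p x * q1 x - q x * p1 x = c * e x / 2 := by
    have hd : ∀ x, HasDerivAt (fun x => p x * q1 x - q x * p1 x - c / 2 * e x) 0 x := by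
      intro x
      refine HasDerivAt.congr_deriv ((((dp x).fun_mul (dq1 x)).fun_sub ((dq x).fun_mul (dp1 x))).fun_sub
        ((de x).const_mul (c / 2))) (Eq.symm ?_)
      ring
    have hi : MemLp (fun x => p x * q1 x - q x * p1 x - c / 2 * e x) 2 (volume : Measure ℝ) := by
      refine MemLp.sub (MemLp.sub ?_ ?_) (Le.const_mul _)
      · exact MemLp.of_le_mul (c := M) Lq1 (cp.aestronglyMeasurable.mul Lq1.1)
          (Filter.Eventually.of_forall fun x => by
            simp only [norm_mul, Real.norm_eq_abs]
            exact mul_le_mul_of_nonneg_right (bp x) (abs_nonneg _))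
      · exact MemLp.of_le_mul (c := M) Lp1 (cq.aestronglyMeasurable.mul Lp1.1)
          (Filter.Eventually.of_forall fun x => by
            simp only [norm_mul, Real.norm_eq_abs]
            exact mul_le_mul_of_nonneg_right (bq x) (abs_nonneg _))
    intro x
    have hcst : (fun x => p x * q1 x - q x * p1 x - c / 2 * e x) =
        fun _ => p x * q1 x - q x * p1 x - c / 2 * e x := funext fun y => aux_const hd y x
    rw [hcst, memLp_const_iff (by norm_num) (by norm_num)] at hi
    rcases hi with hi | hi
    · linarith
    · exact absurd hi (by simp)
  -- e never vanishes
  have hne : ∀ x, e x ≠ 0 := by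
    intro x0 h0
    have hz := aux_gron (K := 2 * M) de (fun x => by
      rw [abs_mul, abs_neg, abs_two, mul_assoc]
      apply mul_le_mul_of_nonneg_left _ zero_le_two
      apply abs_le_of_sq_le_sq _ (by positivity)
      rw [mul_pow, sq_abs]
      have h4 := mul_le_mul_of_nonneg_right (bpq x)
        (add_nonneg (sq_nonneg (p1 x)) (sq_nonneg (q1 x)))
      have h5 := hE x
      nlinarith [sq_nonneg (p x * q1 x - q x * p1 x), mul_nonneg (sq_nonneg M) (sq_nonneg (e x))])
      x0 h0
    obtain ⟨a, b, hab⟩ := hu_nonconst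
    apply hab
    apply is_const_of_deriv_eq_zero (hu_smooth.differentiable (by simp))
    intro x
    have h5 := hE x
    rw [hz x] at h5
    apply Complex.ext
    · rw [← hp1]; simp; nlinarith [sq_nonneg (q1 x), sq_nonneg (p1 x)]
    · rw [← hq1]; simp; nlinarith [sq_nonneg (q1 x), sq_nonneg (p1 x)]
  -- the quotient of the derivative by e is constant
  obtain ⟨R, hR⟩ : ∃ R, ∀ x, p1 x = R * e x := by
    have hd : ∀ x, HasDerivAt (fun x => p1 x / e x) 0 x := by
      intro x
      refine HasDerivAt.congr_deriv ((dp1 x).fun_div (de x) (hne x)) (Eq.symm ?_)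
      rw [eq_comm, div_eq_zero_iff]
      left
      linear_combination 2 * p x * hE x - 2 * q1 x * hP x
    refine ⟨p1 0 / e 0, fun x => ?_⟩
    rw [← aux_const hd x 0, div_mul_cancel₀ _ (hne x)]
  obtain ⟨S, hS⟩ : ∃ S, ∀ x, q1 x = S * e x := by
    have hd : ∀ x, HasDerivAt (fun x => q1 x / e x) 0 x := by
      intro x
      refine HasDerivAt.congr_deriv ((dq1 x).fun_div (de x) (hne x)) (Eq.symm ?_)
      rw [eq_comm, div_eq_zero_iff]
      left
      linear_combination 2 * q x * hE x + 2 * p1 x * hP x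
    refine ⟨q1 0 / e 0, fun x => ?_⟩
    rw [← aux_const hd x 0, div_mul_cancel₀ _ (hne x)]
  have hRS : R ^ 2 + S ^ 2 = 1 / 2 := by
    have h5 := hE 0
    rw [hR, hS] at h5
    apply mul_right_cancel₀ (pow_ne_zero 2 (hne 0))
    linear_combination h5
  have hg : ∀ x, R * q x - S * p x = - c / 2 := by
    intro x
    have h5 := hP x
    rw [hR, hS] at h5
    apply mul_right_cancel₀ (hne x)
    linear_combination -h5
  obtain ⟨f, hf⟩ : ∃ f : ℝ → ℝ, ∀ x, f x = Real.sqrt 2 * (R * p x + S * q x) :=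
    ⟨_, fun _ => rfl⟩
  have hA : 0 < Real.sqrt ((2 - c ^ 2) / 2) := Real.sqrt_pos.2 (by linarith)
  have hA2 : Real.sqrt ((2 - c ^ 2) / 2) ^ 2 = (2 - c ^ 2) / 2 := Real.sq_sqrt (by linarith)
  have hef : ∀ x, Real.sqrt ((2 - c ^ 2) / 2) ^ 2 - f x ^ 2 = e x := by
    intro x
    rw [hA2, hf, he, mul_pow, h22]
    have h5 : (R * q x - S * p x) ^ 2 = c ^ 2 / 4 := by rw [hg]; ring
    linear_combination 2 * h5 - 2 * (p x ^ 2 + q x ^ 2) * hRS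
  obtain ⟨a, ha⟩ := aux_ric (f := f) (k := Real.sqrt (2 - c ^ 2)) hA
    (by rw [← Real.sqrt_mul (by norm_num)]; congr 1; ring)
    (fun x => by
      rw [hef, funext hf]
      refine HasDerivAt.congr_deriv ((((dp x).const_mul R).fun_add ((dq x).const_mul S)).const_mul (Real.sqrt 2)) (Eq.symm ?_)
      rw [hR, hS]
      field_simp
      rw [h22]
      linear_combination -2 * e x * hRS)
    (fun x => by rw [hef]; exact hne x)
  -- the phase
  have hn : ‖(⟨Real.sqrt 2 * R, Real.sqrt 2 * S⟩ : ℂ)‖ = 1 := by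
    have : ‖(⟨Real.sqrt 2 * R, Real.sqrt 2 * S⟩ : ℂ)‖ ^ 2 = 1 := by
      rw [Complex.sq_norm, Complex.normSq_mk]
      linear_combination (R ^ 2 + S ^ 2) * h22 + 2 * hRS
    exact (pow_eq_one_iff_of_nonneg (norm_nonneg _) two_ne_zero).1 this
  refine ⟨Complex.arg ⟨Real.sqrt 2 * R, Real.sqrt 2 * S⟩, a, fun x => ?_⟩
  have hexp := Complex.norm_mul_exp_arg_mul_I (⟨Real.sqrt 2 * R, Real.sqrt 2 * S⟩ : ℂ)
  rw [hn, Complex.ofReal_one, one_mul, mul_comm] at hexp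
  rw [hexp, ← ha x, hf]
  have hgx := hg x
  have hcs : c / Real.sqrt 2 = - Real.sqrt 2 * (R * q x - S * p x) := by
    rw [hgx]; field_simp; rw [h22]
  rw [hcs]
  apply Complex.ext
  · simp
    rw [← hp]
    linear_combination (-(R ^ 2 + S ^ 2) * p x) * h22 - 2 * p x * hRS
  · simp
    rw [← hq]
    linear_combination (-(R ^ 2 + S ^ 2) * q x) * h22 - 2 * q x * hRS
end

section
/- Let W ∈ L¹(ℝ, ℝ) be even, let c > 0, and let η : ℝ → ℝ be a smooth function with η(x) < 1 for all x ∈ ℝ, η ∈ L²(ℝ), η' ∈ L²(ℝ), satisfying η'' − 2(W ⋆ η) + c² η + c² η²/(2(1 − η)) + (η')²/(2(1 − η)) + 2(W ⋆ η)·η = 0 on ℝ. Define θ(x) = (c/2)·∫₀ˣ η(s)/(1 − η(s)) ds and u(x) = √(1 − η(x))·e^{i θ(x)}. Then u satisfies i·c·u'(x) + u''(x) + (W ⋆ (1 − |u|²))(x)·u(x) = 0 for all x ∈ ℝ. -/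
open MeasureTheory

/-- From the hydrodynamic equation back to the traveling-wave equation: if `η < 1` solves
`η'' - 2(W⋆η) + c²η + c²η²/(2(1-η)) + (η')²/(2(1-η)) + 2(W⋆η)η = 0` and
`θ(x) = (c/2)∫₀ˣ η/(1-η)`, then `u = √(1-η) e^{iθ}` solves
`i c u' + u'' + (W ⋆ (1-|u|²)) u = 0`. -/
theorem hydrodynamic_to_travelingWave
    (W : ℝ → ℝ) (hW_int : Integrable W) (hW_even : ∀ x, W (-x) = W x)
    (c : ℝ) (hc : 0 < c)
    (η : ℝ → ℝ) (hη_smooth : ContDiff ℝ (⊤ : ℕ∞) η) (hη_lt : ∀ x, η x < 1)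
    (hη_L2 : MemLp η 2 (volume : Measure ℝ))
    (hη'_L2 : MemLp (deriv η) 2 (volume : Measure ℝ))
    (heq : ∀ x : ℝ,
      deriv (deriv η) x - 2 * (∫ t : ℝ, W t * η (x - t)) + c ^ 2 * η x
        + c ^ 2 * η x ^ 2 / (2 * (1 - η x))
        + (deriv η x) ^ 2 / (2 * (1 - η x))
        + 2 * (∫ t : ℝ, W t * η (x - t)) * η x = 0)
    (θ : ℝ → ℝ) (hθ : ∀ x : ℝ, θ x = c / 2 * ∫ s in (0 : ℝ)..x, η s / (1 - η s))
    (u : ℝ → ℂ)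
    (hu : ∀ x : ℝ, u x = ((Real.sqrt (1 - η x) : ℝ) : ℂ) * Complex.exp (Complex.I * (θ x : ℂ))) :
    ∀ x : ℝ, Complex.I * (c : ℂ) * deriv u x + deriv (deriv u) x +
      (((∫ t : ℝ, W t * (1 - ‖u (x - t)‖ ^ 2)) : ℝ) : ℂ) * u x = 0 := by
  have hpos : ∀ x, 0 < 1 - η x := fun x => by linarith [hη_lt x]
  have hη1 : ∀ x, HasDerivAt η (deriv η x) x := fun x =>
    ((hη_smooth.differentiable (by simp)) x).hasDerivAt
  have hη2 : ∀ x, HasDerivAt (deriv η) (deriv (deriv η) x) x := fun x => by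
    have h : ContDiff ℝ 2 η := contDiff_infty.1 hη_smooth 2
    have h1 : ContDiff ℝ 1 (deriv η) := by
      have h' : ContDiff ℝ (1 + 1) η := by
        norm_num
        exact h
      exact (contDiff_succ_iff_deriv.1 h').2.2
    exact ((h1.differentiable (by simp)) x).hasDerivAt
  have hcont : Continuous fun s => η s / (1 - η s) :=
    hη_smooth.continuous.div (continuous_const.sub hη_smooth.continuous) fun x => (hpos x).ne'
  have hθ1 : ∀ x, HasDerivAt θ (c / 2 * (η x / (1 - η x))) x := fun x => by
    rw [show θ = fun x => c / 2 * ∫ s in (0 : ℝ)..x, η s / (1 - η s) from funext hθ]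
    exact (intervalIntegral.integral_hasDerivAt_right (hcont.intervalIntegrable _ _)
      (hcont.stronglyMeasurableAtFilter _ _) hcont.continuousAt).const_mul _
  have hnorm : ∀ x, 1 - ‖u x‖ ^ 2 = η x := fun x => by
    rw [hu, mul_comm Complex.I, norm_mul, Complex.norm_exp_ofReal_mul_I, mul_one,
      Complex.norm_real, Real.norm_eq_abs, sq_abs, Real.sq_sqrt (hpos x).le]
    ring
  set a : ℝ → ℝ := fun x => -deriv η x / (2 * (1 - η x)) with ha
  set b : ℝ → ℝ := fun x => c * η x / (2 * (1 - η x)) with hb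
  have hden : ∀ x, HasDerivAt (fun x => 2 * (1 - η x)) (2 * (-deriv η x)) x := fun x =>
    ((hη1 x).const_sub 1).const_mul 2
  have hden0 : ∀ x, 2 * (1 - η x) ≠ 0 := fun x => by
    have := hpos x
    positivity
  have ha1 := fun x => (hη2 x).neg.fun_div (hden x) (hden0 x)
  have hb1 := fun x => ((hη1 x).const_mul c).fun_div (hden x) (hden0 x)
  have hu1 : ∀ x, HasDerivAt u (((a x : ℂ) + Complex.I * (b x : ℂ)) * u x) x := fun x => by
    have hs := (((hη1 x).const_sub 1).sqrt (hpos x).ne').ofReal_comp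
    have he := ((hθ1 x).ofReal_comp.const_mul Complex.I).cexp
    have h := hs.fun_mul he
    rw [← show u = _ from funext hu] at h
    refine h.congr_deriv ?_
    rw [hu x]
    have hr0 : Real.sqrt (1 - η x) ≠ 0 := (Real.sqrt_pos.2 (hpos x)).ne'
    have hA : -deriv η x / (2 * Real.sqrt (1 - η x)) = a x * Real.sqrt (1 - η x) := by
      have := Real.sq_sqrt (hpos x).le
      have h0 := (hpos x).ne'
      simp only [ha]
      field_simp
      rw [this]
    have hB : c / 2 * (η x / (1 - η x)) = b x := by
      have h0 := (hpos x).ne'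
      simp only [hb]
      field_simp
    rw [hA, hB]
    push_cast
    ring
  have hdu : deriv u = fun x => ((a x : ℂ) + Complex.I * (b x : ℂ)) * u x :=
    funext fun x => (hu1 x).deriv
  intro x
  have hI : (∫ t : ℝ, W t * (1 - ‖u (x - t)‖ ^ 2)) = ∫ t : ℝ, W t * η (x - t) := by
    simp only [hnorm]
  rw [hI]
  have hx := heq x
  generalize (∫ t : ℝ, W t * η (x - t)) = w at hx ⊢
  have h2 := (((ha1 x).ofReal_comp.add ((hb1 x).ofReal_comp.const_mul Complex.I)).fun_mul
    (hu1 x))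
  have h2' := h2.deriv
  rw [hdu]
  erw [h2']
  generalize hA' : (-deriv (deriv η) x * (2 * (1 - η x)) - (-deriv η) x * (2 * -deriv η x)) / (2 * (1 - η x)) ^ 2 = A
  generalize hB' : (c * deriv η x * (2 * (1 - η x)) - c * η x * (2 * -deriv η x)) / (2 * (1 - η x)) ^ 2 = B
  have h0 := (hpos x).ne'
  have e1 : -(c * b x) + A + a x ^ 2 - b x ^ 2 + w = 0 := by
    rw [← hA']
    simp only [ha, hb, Pi.neg_apply]
    field_simp at hx ⊢
    linear_combination (-1) * hx
  have e2 : c * a x + B + 2 * a x * b x = 0 := by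
    rw [← hB']
    simp only [ha, hb]
    field_simp
    ring
  have e1' : -((c : ℂ) * b x) + A + (a x : ℂ) ^ 2 - (b x : ℂ) ^ 2 + w = 0 := by exact_mod_cast e1
  have e2' : (c : ℂ) * a x + B + 2 * a x * b x = 0 := by exact_mod_cast e2
  simp only [Pi.add_apply]
  linear_combination (u x) * e1' + Complex.I * u x * e2' + (c * b x + (b x : ℂ) ^ 2) * u x * Complex.I_sq
end
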